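/- Let r ≥ 2 be an integer, let c = 384r, let W ⊆ [n] be a fixed set of at most n/(100r)^4 vertices, and let G ~ G(n,p) where p = p(n) ≫ (log n / n)^{1/2}. Then with high probability, for every r-coloring of the edges of G and every associated majority-color partition W = W_1 ⊎ … ⊎ W_r, each auxiliary graph H_i (for i ∈ [r]) contains 3r − 1 vertex-disjoint cycles covering all but at most 18·r^2·c/p + (3r)^3 vertices of H_i. -/

import Mathlib

open MeasureTheory Filter

noncomputable def bernoulliM (q : ℝ) : Measure Bool :=
  ENNReal.ofReal q • Measure.dirac true + ENNReal.ofReal (1 - q) • Measure.dirac false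

noncomputable def gnp (n : ℕ) (q : ℝ) : Measure (Sym2 (Fin n) → Bool) :=
  Measure.pi fun _ => bernoulliM q

def graphOf {n : ℕ} (ω : Sym2 (Fin n) → Bool) : SimpleGraph (Fin n) :=
  SimpleGraph.fromRel (fun u v => ω s(u, v))

def IsCycleSet {V : Type*} (G : SimpleGraph V) (S : Set V) : Prop :=
  (∃ v, S = {v}) ∨
  (∃ u v, G.Adj u v ∧ S = {u, v}) ∨
  (∃ (v : V) (w : G.Walk v v), w.IsCycle ∧ S = {x | x ∈ w.support})

/-- `N_i(v, U)`: the set of vertices of `U` joined to `v` by an edge of color `i`. -/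
def coloredNbhd {n r : ℕ} (G : SimpleGraph (Fin n)) (c : Sym2 (Fin n) → Fin r) (i : Fin r)
    (v : Fin n) (U : Set (Fin n)) : Set (Fin n) :=
  {u | u ∈ U ∧ G.Adj v u ∧ c s(v, u) = i}

/-- `f` records a majority-color partition of `W`: `v` belongs to the class `f v` only if
color `f v` is (one of) the most common color(s) on edges from `v` to `U = V ∖ W`. -/
def IsMajorityPartition {n r : ℕ} (G : SimpleGraph (Fin n)) (c : Sym2 (Fin n) → Fin r)
    (W : Finset (Fin n)) (f : Fin n → Fin r) : Prop :=
  ∀ v ∈ W, ∀ j : Fin r,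
    (coloredNbhd G c j v ((W : Set (Fin n))ᶜ)).ncard ≤
      (coloredNbhd G c (f v) v ((W : Set (Fin n))ᶜ)).ncard

/-- The auxiliary graph `H_i` on `W_i = {v ∈ W | f v = i}`: two vertices `v, w ∈ W_i` are
adjacent iff `|N_i(v,U) ∩ N_i(w,U)| ≥ thr`, where `U = V ∖ W`. -/
def auxGraph {n r : ℕ} (G : SimpleGraph (Fin n)) (c : Sym2 (Fin n) → Fin r)
    (W : Finset (Fin n)) (f : Fin n → Fin r) (i : Fin r) (thr : ℝ) : SimpleGraph (Fin n) :=
  SimpleGraph.fromRel (fun v w => v ∈ W ∧ w ∈ W ∧ f v = i ∧ f w = i ∧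
    thr ≤ ((coloredNbhd G c i v ((W : Set (Fin n))ᶜ) ∩
            coloredNbhd G c i w ((W : Set (Fin n))ᶜ)).ncard : ℝ))

/-!
Run a depth-first search and close its path into a cycle at the deepest possible vertex: a vertex
set with at least `s` elements splits into one cycle, at most `2s` further vertices and a rest
in which some disjoint set `S` of size `s` has no neighbors. Iterating on the rest, `k` cycles
cover all but `(2k + 1)s` vertices unless there are `k + 1` pairwise nonadjacent sets of size `s`.

In `H_i` there are no `3r` such sets with `s = ⌈384r / p⌉`. By the majority rule the color-`i`
neighborhoods in `U` of the vertices of `W_i` have at least a `1/r` fraction of their full size,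
so by Cauchy–Schwarz the `3r` sets cannot have almost disjoint neighborhoods. The only input from
`G(n,p)` is the size of neighborhoods and of common neighborhoods of pairs, controlled by Chernoff
bounds.
-/

section CycleCover

variable {V : Type*} {H : SimpleGraph V}

lemma isCycleSet_of_isChain {x y : V} {l : List V} (hnodup : (x :: (l ++ [y])).Nodup)
    (hchain : (x :: (l ++ [y])).IsChain H.Adj) (hadj : H.Adj y x) :
    IsCycleSet H {v | v ∈ x :: (l ++ [y])} := by
  rcases l with _ | ⟨z, l⟩
  · exact .inr (.inl ⟨x, y, hadj.symm, by ext v; simp⟩)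
  · obtain ⟨w, hw⟩ : ∃ w : H.Walk x y, w.support = x :: (z :: l ++ [y]) :=
      ⟨(SimpleGraph.Walk.ofSupport _ (List.cons_ne_nil _ _) hchain).copy List.head_cons (by simp),
        by rw [SimpleGraph.Walk.support_copy, SimpleGraph.Walk.support_ofSupport]⟩
    have hpath : w.IsPath := by rwa [SimpleGraph.Walk.isPath_def, hw]
    refine .inr (.inr ⟨y, .cons hadj w,
      (SimpleGraph.Walk.cons_isCycle_iff _ _).2 ⟨hpath, fun hmem ↦ ?_⟩, ?_⟩)
    · have hlength := hpath.length_eq_one_of_mem_edges (Sym2.eq_swap ▸ hmem)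
      have hsupport := w.length_support
      simp [hw, hlength] at hsupport
    · ext v
      simp only [SimpleGraph.Walk.support_cons, hw, List.mem_cons, List.mem_append,
        Set.mem_ofPred_eq]
      tauto

/-- A list tracing a path of `H` inside `X`. Used as the stack of a depth-first search, whose top
is the head of the list. -/
structure IsPathList (H : SimpleGraph V) (X : Finset V) (l : List V) : Prop where
  nodup : l.Nodup
  isChain : l.IsChain H.Adj
  mem_of_mem : ∀ v ∈ l, v ∈ X

namespace IsPathList

variable {X : Finset V} {l l' : List V}

lemma nil : IsPathList H X [] := ⟨.nil, .nil, by simp⟩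

lemma of_isInfix (h : IsPathList H X l) (hl : l' <:+: l) : IsPathList H X l' :=
  ⟨h.nodup.sublist hl.sublist,
    by obtain ⟨s, t, rfl⟩ := hl; exact h.isChain.left_of_append.right_of_append,
    fun v hv ↦ h.mem_of_mem v (hl.subset hv)⟩

lemma length_le_card (h : IsPathList H X l) : l.length ≤ X.card := by
  classical
  rw [← List.toFinset_card_of_nodup h.nodup]
  exact Finset.card_le_card fun v hv ↦ h.mem_of_mem v (List.mem_toFinset.1 hv)

end IsPathList

lemma exists_forall_length_le {α : Type*} {Q : List α → Prop} {N : ℕ} (hne : ∃ l, Q l)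
    (hN : ∀ l, Q l → l.length ≤ N) : ∃ l, Q l ∧ ∀ l', Q l' → l'.length ≤ l.length := by
  obtain ⟨l, hl, hmin⟩ := exists_minimalFor_of_wellFoundedLT Q (fun l ↦ N - l.length) hne
  refine ⟨l, hl, fun l' hl' ↦ ?_⟩
  by_contra! hlt
  have := hmin hl' (Nat.sub_le_sub_left hlt.le N)
  have := hN l' hl'
  lia

/-- A state of a depth-first search of `H` inside `X`. The stack is `R ++ P` (top first), where `P`
is the bottom part that is never popped, and `S` is the set of vertices popped so far. -/
structure IsDFSState (H : SimpleGraph V) (X : Finset V) (P R : List V) (S : Finset V) : Prop where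
  isPathList : IsPathList H X (R ++ P)
  subset : S ⊆ X
  notMem_stack : ∀ y ∈ S, y ∉ R ++ P
  mem_of_adj : ∀ y ∈ S, ∀ z ∈ X, H.Adj y z → z ∈ S ∨ z ∈ R ++ P
  exists_isPathList : ∀ y ∈ S, ∃ R', IsPathList H X (y :: (R' ++ P))

namespace IsDFSState

variable {X S : Finset V} {P R : List V}

lemma push {z : V} (h : IsDFSState H X P R S) (hpath : IsPathList H X (z :: R ++ P))
    (hz : z ∉ S) : IsDFSState H X P (z :: R) S where
  isPathList := hpath
  subset := h.subset
  notMem_stack y hy := by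
    simpa only [List.cons_append, List.mem_cons, not_or]
      using ⟨fun hyz ↦ hz (hyz ▸ hy), h.notMem_stack y hy⟩
  mem_of_adj y hy v hv hadj := (h.mem_of_adj y hy v hv hadj).imp_right (List.mem_cons_of_mem z)
  exists_isPathList := h.exists_isPathList

lemma pop [DecidableEq V] {y : V} (h : IsDFSState H X P (y :: R) S)
    (hmax : ∀ R', IsDFSState H X P R' S → R'.length ≤ R.length + 1) :
    IsDFSState H X P R (insert y S) where
  isPathList := h.isPathList.of_isInfix (List.suffix_cons y (R ++ P)).isInfix
  subset := Finset.insert_subset (h.isPathList.mem_of_mem y (by simp)) h.subset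
  notMem_stack v hv := by
    rcases Finset.mem_insert.1 hv with rfl | hv
    · exact (List.nodup_cons.1 h.isPathList.nodup).1
    · exact fun hmem ↦ h.notMem_stack v hv (List.mem_cons_of_mem y hmem)
  mem_of_adj v hv z hz hadj := by
    have hy : z = y ∨ z ∈ R ++ P ↔ z ∈ y :: R ++ P := by simp
    suffices z ∈ S ∨ z ∈ y :: R ++ P by rw [Finset.mem_insert]; tauto
    rcases Finset.mem_insert.1 hv with rfl | hv
    · by_contra! hnew
      have hpath : IsPathList H X (z :: (v :: R) ++ P) :=
        ⟨h.isPathList.nodup.cons hnew.2, h.isPathList.isChain.cons_cons hadj.symm,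
          List.forall_mem_cons.2 ⟨hz, h.isPathList.mem_of_mem⟩⟩
      simpa using hmax _ (h.push hpath hnew.1)
    · exact h.mem_of_adj v hv z hz hadj
  exists_isPathList v hv := by
    rcases Finset.mem_insert.1 hv with rfl | hv
    · exact ⟨R, h.isPathList⟩
    · exact h.exists_isPathList v hv

lemma exists_card_succ [DecidableEq V] {R₀ : List V} (h₀ : IsDFSState H X P R₀ S)
    (hlt : S.card < X.card) (hne : R₀ ≠ [] ∨ P = []) :
    ∃ R y, y ∉ S ∧ R₀.length ≤ R.length + 1 ∧ IsDFSState H X P R (insert y S) := by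
  obtain ⟨R, hR, hmax⟩ := exists_forall_length_le (Q := (IsDFSState H X P · S)) ⟨R₀, h₀⟩
    fun R h ↦ (List.prefix_append R P).length_le.trans h.isPathList.length_le_card
  rcases R with _ | ⟨y, R⟩
  · obtain rfl : P = [] := hne.resolve_left (not_not.2 (List.eq_nil_of_length_eq_zero
      (Nat.le_zero.1 (hmax R₀ h₀))))
    obtain ⟨z, hzX, hzS⟩ := Finset.exists_mem_notMem_of_card_lt_card hlt
    simpa using hmax [z] (hR.push ⟨by simp, by simp, by simpa using hzX⟩ hzS)
  · exact ⟨R, y, fun hy ↦ hR.notMem_stack y hy (by simp), hmax R₀ h₀, hR.pop hmax⟩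

end IsDFSState

lemma exists_isDFSState {X : Finset V} {s : ℕ} (hs : s ≤ X.card) :
    ∃ P R S, IsDFSState H X P R S ∧ S.card = s ∧ R.length ≤ s := by
  classical
  obtain ⟨L, hL, hmax⟩ := exists_forall_length_le (⟨[], .nil⟩ : ∃ l, IsPathList H X l)
    fun l hl ↦ hl.length_le_card
  have hstate : ∀ t ≤ s, ∃ R S, IsDFSState H X (L.drop s) R S ∧ S.card = t ∧
      min s L.length ≤ R.length + t := by
    intro t
    induction t with
    | zero => exact fun _ ↦ ⟨L.take s, ∅, ⟨by rwa [List.take_append_drop], by simp, by simp,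
        by simp, by simp⟩, by simp, by simp⟩
    | succ t ih =>
      intro ht
      obtain ⟨R₀, S, h₀, hS, hlength⟩ := ih (by lia)
      have hne : R₀ ≠ [] ∨ L.drop s = [] := by
        rw [List.drop_eq_nil_iff, ← List.length_pos_iff_ne_nil]
        lia
      obtain ⟨R, y, hy, hR, h⟩ := h₀.exists_card_succ (by lia) hne
      exact ⟨R, insert y S, h, by rw [Finset.card_insert_of_notMem hy, hS], by lia⟩
  obtain ⟨R, S, h, hS, -⟩ := hstate s le_rfl
  have hlength := hmax _ h.isPathList
  rw [List.length_append, List.length_drop] at hlength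
  exact ⟨_, R, S, h, hS, by lia⟩

lemma exists_append_cons_forall_not {α : Type*} {q : α → Prop} {l : List α} (h : ∃ x ∈ l, q x) :
    ∃ l₁ x l₂, l = l₁ ++ x :: l₂ ∧ q x ∧ ∀ z ∈ l₂, ¬q z := by
  induction l with
  | nil => simp at h
  | cons a l ih =>
    by_cases hl : ∃ x ∈ l, q x
    · obtain ⟨l₁, x, l₂, rfl, hx, hl₂⟩ := ih hl
      exact ⟨a :: l₁, x, l₂, rfl, hx, hl₂⟩
    · push Not at hl
      exact ⟨[], a, l, rfl, ((List.exists_mem_cons_iff ..).1 h).resolve_right (by simpa using hl),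
        hl⟩

lemma IsDFSState.exists_absorbing {X S : Finset V} {P R : List V} (h : IsDFSState H X P R S) :
    ∃ C : Set V, (C = ∅ ∨ IsCycleSet H C) ∧ C ⊆ X ∧
      ∀ z ∈ P, z ∉ C → ∀ y ∈ S, ¬H.Adj y z := by
  by_cases hadj : ∃ x ∈ P, ∃ y ∈ S, H.Adj y x
  · -- Close up at the deepest vertex of `P` with a neighbor in `S`: the cycle then contains
    -- every vertex of `P` with such a neighbor.
    obtain ⟨P₁, x, P₂, rfl, ⟨y, hy, hyx⟩, hP₂⟩ := exists_append_cons_forall_not hadj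
    obtain ⟨R', hR'⟩ := h.exists_isPathList y hy
    have hpath : IsPathList H X (y :: ((R' ++ P₁) ++ [x])) :=
      hR'.of_isInfix (List.IsPrefix.isInfix ⟨P₂, by simp⟩)
    refine ⟨_, .inr (isCycleSet_of_isChain hpath.nodup hpath.isChain hyx.symm),
      hpath.mem_of_mem, fun z hz hzC v hv hvz ↦ ?_⟩
    have hz' : z ∈ P₂ := by
      simp only [List.append_assoc, List.mem_append, List.mem_cons, Set.mem_ofPred_eq] at hz hzC
      tauto
    exact hP₂ z hz' ⟨v, hv, hvz⟩
  · push Not at hadj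
    exact ⟨∅, .inl rfl, Set.empty_subset _, fun z hz _ ↦ hadj z hz⟩

/-- At most `k` pairwise disjoint cycles of `H` inside `X` cover all but at most `m` vertices
of `X`. -/
def HasCycleCover (H : SimpleGraph V) (X : Set V) (k : ℕ) (m : ℝ) : Prop :=
  ∃ 𝒞 : Finset (Set V),
    𝒞.card ≤ k ∧
    (𝒞 : Set (Set V)).Pairwise Disjoint ∧
    (∀ S ∈ 𝒞, IsCycleSet H S ∧ S ⊆ X) ∧
    ((X \ ⋃₀ (𝒞 : Set (Set V))).ncard : ℝ) ≤ m

namespace HasCycleCover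

variable {X Y C : Set V} {k : ℕ} {m m' : ℝ}

lemma of_ncard_le (h : (X.ncard : ℝ) ≤ m) : HasCycleCover H X k m :=
  ⟨∅, by simp, by simp, by simp, by simpa using h⟩

lemma mono (h : HasCycleCover H X k m) (hm : m ≤ m') : HasCycleCover H X k m' := by
  obtain ⟨𝒞, hcard, hdisj, hcycle, hle⟩ := h
  exact ⟨𝒞, hcard, hdisj, hcycle, hle.trans hm⟩

lemma of_subset (h : HasCycleCover H Y k m) (hYX : Y ⊆ X) (hX : X.Finite)
    (hm : ((X \ Y).ncard : ℝ) ≤ m') : HasCycleCover H X k (m + m') := by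
  obtain ⟨𝒞, hcard, hdisj, hcycle, hle⟩ := h
  refine ⟨𝒞, hcard, hdisj, fun S hS ↦ ⟨(hcycle S hS).1, (hcycle S hS).2.trans hYX⟩, ?_⟩
  have hsub : X \ ⋃₀ (𝒞 : Set (Set V)) ⊆ (Y \ ⋃₀ 𝒞) ∪ (X \ Y) := fun v hv ↦ by
    by_cases hvY : v ∈ Y
    · exact .inl ⟨hvY, hv.2⟩
    · exact .inr ⟨hv.1, hvY⟩
  have hncard := (Set.ncard_le_ncard hsub ((hX.subset hYX).sdiff.union hX.sdiff)).trans
    (Set.ncard_union_le _ _)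
  calc ((X \ ⋃₀ (𝒞 : Set (Set V))).ncard : ℝ)
      ≤ (Y \ ⋃₀ (𝒞 : Set (Set V))).ncard + (X \ Y).ncard := mod_cast hncard
    _ ≤ m + m' := add_le_add hle hm

lemma union_cycle (h : HasCycleCover H Y k m) (hC : C = ∅ ∨ IsCycleSet H C)
    (hCY : Disjoint C Y) : HasCycleCover H (Y ∪ C) (k + 1) m := by
  classical
  obtain ⟨𝒞, hcard, hdisj, hcycle, hle⟩ := h
  rcases hC with rfl | hC
  · exact ⟨𝒞, hcard.trans k.le_succ, hdisj, by simpa using hcycle, by simpa using hle⟩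
  refine ⟨insert C 𝒞, (Finset.card_insert_le _ _).trans (Nat.succ_le_succ hcard), ?_, ?_, ?_⟩
  · rw [Finset.coe_insert, Set.pairwise_insert_of_symm]
    exact ⟨hdisj, fun S hS _ ↦ hCY.mono_right (hcycle S hS).2⟩
  · rw [Finset.forall_mem_insert]
    exact ⟨⟨hC, Set.subset_union_right⟩,
      fun S hS ↦ ⟨(hcycle S hS).1, (hcycle S hS).2.trans Set.subset_union_left⟩⟩
  · rwa [Finset.coe_insert, Set.sUnion_insert, ← Set.sdiff_sdiff, Set.union_sdiff_right,
      hCY.symm.sdiff_eq_left]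

end HasCycleCover

/-- Disjoint `s`-element subsets of `X` with no edge of `H` between any two of them. -/
structure IsNonadjacentFamily (H : SimpleGraph V) (X : Finset V) (s : ℕ)
    (𝒜 : Finset (Finset V)) : Prop where
  subset : ∀ A ∈ 𝒜, A ⊆ X
  card_eq : ∀ A ∈ 𝒜, A.card = s
  pairwiseDisjoint : (𝒜 : Set (Finset V)).PairwiseDisjoint id
  not_adj : (𝒜 : Set (Finset V)).Pairwise fun A B ↦ ∀ a ∈ A, ∀ b ∈ B, ¬H.Adj a b

namespace IsNonadjacentFamily

variable {X Y S : Finset V} {s : ℕ} {𝒜 : Finset (Finset V)}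

lemma singleton (hS : S ⊆ X) : IsNonadjacentFamily H X S.card {S} :=
  ⟨by simpa using hS, by simp, by simp, by simp⟩

lemma notMem_of_disjoint (h : IsNonadjacentFamily H Y s 𝒜) (hS : S.Nonempty)
    (hSY : Disjoint S Y) : S ∉ 𝒜 := fun hmem ↦
  hS.ne_empty ((hSY.mono_right (h.subset S hmem)).eq_bot_of_self)

lemma insert [DecidableEq V] (h : IsNonadjacentFamily H Y S.card 𝒜) (hYX : Y ⊆ X) (hSX : S ⊆ X)
    (hSY : Disjoint S Y) (hadj : ∀ y ∈ S, ∀ z ∈ Y, ¬H.Adj y z) :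
    IsNonadjacentFamily H X S.card (insert S 𝒜) where
  subset := Finset.forall_mem_insert _ _ _ |>.2 ⟨hSX, fun A hA ↦ (h.subset A hA).trans hYX⟩
  card_eq := Finset.forall_mem_insert _ _ _ |>.2 ⟨rfl, h.card_eq⟩
  pairwiseDisjoint := by
    rw [Finset.coe_insert]
    exact h.pairwiseDisjoint.insert fun A hA _ ↦ hSY.mono_right (h.subset A hA)
  not_adj := by
    have : Std.Symm fun A B : Finset V ↦ ∀ a ∈ A, ∀ b ∈ B, ¬H.Adj a b :=
      ⟨fun A B hAB b hb a ha hba ↦ hAB a ha b hb hba.symm⟩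
    rw [Finset.coe_insert, Set.pairwise_insert_of_symm]
    exact ⟨h.not_adj, fun A hA _ y hy z hz ↦ hadj y hy z (h.subset A hA hz)⟩

end IsNonadjacentFamily

lemma exists_nonadjacent_hasCycleCover_succ {X : Finset V} {s : ℕ} (hs : s ≤ X.card) :
    ∃ S ⊆ X, S.card = s ∧ ∃ Y ⊆ X, Disjoint S Y ∧ (∀ y ∈ S, ∀ z ∈ Y, ¬H.Adj y z) ∧
      ∀ k m, HasCycleCover H Y k m → HasCycleCover H X (k + 1) (m + 2 * s) := by
  classical
  obtain ⟨P, R, S, h, rfl, hR⟩ := exists_isDFSState (H := H) hs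
  obtain ⟨C, hC, hCX, habsorb⟩ := h.exists_absorbing
  let Y : Finset V := {v ∈ X | v ∉ S ∧ v ∉ R ∧ v ∉ C}
  have hYX : Y ⊆ X := Finset.filter_subset _ _
  have hrest : (((X : Set V) \ (Y ∪ C)).ncard : ℝ) ≤ 2 * S.card := by
    have hsub : (X : Set V) \ (Y ∪ C) ⊆ (S ∪ R.toFinset : Finset V) := fun v hv ↦ by
      simp only [Y, Set.mem_sdiff, Set.mem_union, Finset.mem_coe, Finset.mem_filter,
        Finset.mem_union, List.mem_toFinset] at hv ⊢
      tauto
    have hncard := Set.ncard_le_ncard hsub (Finset.finite_toSet _)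
    rw [Set.ncard_coe_finset] at hncard
    have := R.toFinset_card_le
    exact_mod_cast hncard.trans ((Finset.card_union_le _ _).trans (by lia))
  refine ⟨S, h.subset, rfl, Y, hYX, ?_, fun y hy z hz hyz ↦ ?_, fun k m hY ↦ ?_⟩
  · exact Finset.disjoint_right.2 fun v hv ↦ (Finset.mem_filter.1 hv).2.1
  · obtain ⟨hzX, hzS, hzR, hzC⟩ := Finset.mem_filter.1 hz
    have hzP : z ∈ P := (List.mem_append.1
      ((h.mem_of_adj y hy z hzX hyz).resolve_left hzS)).resolve_left hzR
    exact habsorb z hzP hzC y hy hyz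
  · have hCY : Disjoint C Y := Set.disjoint_right.2 fun v hv ↦ (Finset.mem_filter.1 hv).2.2.2
    exact (hY.union_cycle hC hCY).of_subset (Set.union_subset (mod_cast hYX) hCX)
      X.finite_toSet hrest

theorem hasCycleCover_of_isNonadjacentFamily {s : ℕ} (hs : 0 < s) {k : ℕ} {X : Finset V}
    (hX : ∀ 𝒜, IsNonadjacentFamily H X s 𝒜 → 𝒜.card ≠ k + 1) :
    HasCycleCover H X k ((2 * k + 1) * s) := by
  classical
  induction k generalizing X with
  | zero =>
    refine .of_ncard_le ?_
    by_contra! hlt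
    obtain ⟨S, hS, rfl⟩ := Finset.exists_subset_card_eq (n := s) (s := X)
      (by rw [Set.ncard_coe_finset] at hlt; exact_mod_cast (by simpa using hlt.le))
    exact hX {S} (.singleton hS) (by simp)
  | succ k ih =>
    rcases lt_or_ge X.card s with hlt | hle
    · refine .of_ncard_le ?_
      rw [Set.ncard_coe_finset]
      have : (X.card : ℝ) ≤ s := mod_cast hlt.le
      exact this.trans (le_mul_of_one_le_left (by positivity) (by push_cast; linarith))
    obtain ⟨S, hSX, rfl, Y, hYX, hSY, hadj, hcover⟩ :=
      exists_nonadjacent_hasCycleCover_succ (H := H) hle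
    have hY : HasCycleCover H Y k ((2 * k + 1) * S.card) := ih fun 𝒜 h𝒜 hcard ↦
      hX _ (h𝒜.insert hYX hSX hSY hadj) (by
        rw [Finset.card_insert_of_notMem (h𝒜.notMem_of_disjoint (Finset.card_pos.1 hs) hSY), hcard])
    exact (hcover k _ hY).mono (by push_cast; linarith)

end CycleCover

section Counting

variable {V α : Type*} [DecidableEq α]

/-- The number of indices `a ∈ A` whose set `N a` contains `u`, as a real number. -/
def coverCount (N : V → Finset α) (A : Finset V) (u : α) : ℝ := (A.filter (u ∈ N ·)).card

lemma coverCount_eq_sum (N : V → Finset α) (A : Finset V) (u : α) :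
    coverCount N A u = ∑ a ∈ A, if u ∈ N a then 1 else 0 :=
  (Finset.sum_boole _ _).symm

lemma coverCount_mono {N D : V → Finset α} {A : Finset V} (h : ∀ a ∈ A, N a ⊆ D a) (u : α) :
    coverCount N A u ≤ coverCount D A u :=
  Nat.cast_le.2 <| Finset.card_le_card fun a ha ↦ by
    rw [Finset.mem_filter] at ha ⊢
    exact ⟨ha.1, h a ha.1 ha.2⟩

lemma sum_coverCount [Fintype α] (N : V → Finset α) (A : Finset V) :
    ∑ u, coverCount N A u = ∑ a ∈ A, ((N a).card : ℝ) := by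
  simp_rw [coverCount_eq_sum]
  rw [Finset.sum_comm]
  simp

lemma sum_coverCount_mul [Fintype α] (N : V → Finset α) (A B : Finset V) :
    ∑ u, coverCount N A u * coverCount N B u = ∑ a ∈ A, ∑ b ∈ B, ((N a ∩ N b).card : ℝ) := by
  simp_rw [coverCount_eq_sum, Finset.sum_mul_sum]
  rw [Finset.sum_comm]
  refine Finset.sum_congr rfl fun a _ ↦ ?_
  rw [Finset.sum_comm]
  refine Finset.sum_congr rfl fun b _ ↦ ?_
  simp_rw [ite_zero_mul_ite_zero, mul_one, ← Finset.mem_inter, Finset.sum_boole,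
    Finset.filter_univ_mem]

lemma sum_coverCount_mul_le [Fintype α] {N : V → Finset α} {A B : Finset V} {m : ℝ}
    (h : ∀ a ∈ A, ∀ b ∈ B, ((N a ∩ N b).card : ℝ) ≤ m) :
    ∑ u, coverCount N A u * coverCount N B u ≤ A.card * B.card * m := by
  calc ∑ u, coverCount N A u * coverCount N B u
      = ∑ a ∈ A, ∑ b ∈ B, ((N a ∩ N b).card : ℝ) := sum_coverCount_mul N A B
    _ ≤ ∑ _a ∈ A, ∑ _b ∈ B, m := Finset.sum_le_sum fun a ha ↦ Finset.sum_le_sum (h a ha)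
    _ = A.card * B.card * m := by simp only [Finset.sum_const, nsmul_eq_mul, mul_assoc]

lemma sum_sq_coverCount_le_of_subset [Fintype α] {N D : V → Finset α} {A : Finset V}
    (h : ∀ a ∈ A, N a ⊆ D a) (t : ℝ) :
    ∑ u, coverCount N A u ^ 2 ≤
      4 / 3 * (t * ∑ u, coverCount N A u + ∑ u, (coverCount D A u - t) ^ 2) := by
  rw [Finset.mul_sum, ← Finset.sum_add_distrib, Finset.mul_sum]
  refine Finset.sum_le_sum fun u _ ↦ ?_
  have hnonneg : 0 ≤ coverCount N A u := Nat.cast_nonneg _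
  nlinarith [mul_le_mul_of_nonneg_left (coverCount_mono h u) hnonneg,
    sq_nonneg (coverCount N A u / 2 - (coverCount D A u - t))]

/-- Cardinalities and pairwise intersections of the sets `D a`, `a ∈ X`, are as in a random set
system of density `p`, up to a relative error `δ`. As `{a, b}` has one or two elements, the upper
bound covers both `D a` (for `a = b`) and `D a ∩ D b`. -/
structure IsPseudorandom [DecidableEq V] [Fintype α] (D : V → Finset α) (X : Finset V)
    (p δ : ℝ) : Prop where
  le_card : ∀ a ∈ X, (1 - δ) * (Fintype.card α * p) ≤ (D a).card
  card_inter_le : ∀ a ∈ X, ∀ b ∈ X,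
    ((D a ∩ D b).card : ℝ) ≤ (1 + δ) * (Fintype.card α * p ^ ({a, b} : Finset V).card)

namespace IsPseudorandom

variable [DecidableEq V] [Fintype α] {D : V → Finset α} {X A : Finset V} {p δ : ℝ}

lemma mono {Y : Finset V} (h : IsPseudorandom D X p δ) (hYX : Y ⊆ X) : IsPseudorandom D Y p δ :=
  ⟨fun a ha ↦ h.le_card a (hYX ha),
    fun a ha b hb ↦ h.card_inter_le a (hYX ha) b (hYX hb)⟩

lemma mul_le_sum_coverCount (h : IsPseudorandom D X p δ) (hA : A ⊆ X) :
    (1 - δ) * (Fintype.card α * (A.card * p)) ≤ ∑ u, coverCount D A u :=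
  calc (1 - δ) * (Fintype.card α * (A.card * p))
      = ∑ a ∈ A, (1 - δ) * (Fintype.card α * p) := by
        rw [Finset.sum_const, nsmul_eq_mul]; ring
    _ ≤ ∑ a ∈ A, ((D a).card : ℝ) := Finset.sum_le_sum fun a ha ↦ h.le_card a (hA ha)
    _ = ∑ u, coverCount D A u := (sum_coverCount D A).symm

lemma sum_sq_coverCount_le (h : IsPseudorandom D X p δ) (hA : A ⊆ X) (hδ : 0 ≤ δ) :
    ∑ u, coverCount D A u ^ 2 ≤
      (1 + δ) * (Fintype.card α * (A.card * p + (A.card * p) ^ 2)) := by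
  have hpow (a b : V) : p ^ ({a, b} : Finset V).card ≤ (if a = b then p else 0) + p ^ 2 := by
    split_ifs with hab
    · simpa [hab] using sq_nonneg p
    · simp [Finset.card_pair hab]
  calc ∑ u, coverCount D A u ^ 2
      = ∑ a ∈ A, ∑ b ∈ A, ((D a ∩ D b).card : ℝ) := by
        simp_rw [sq, sum_coverCount_mul]
    _ ≤ ∑ a ∈ A, ∑ b ∈ A,
          (1 + δ) * (Fintype.card α * ((if a = b then p else 0) + p ^ 2)) := by
        gcongr with a ha b hb
        exact (h.card_inter_le a (hA ha) b (hA hb)).trans (by gcongr; exact hpow a b)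
    _ = (1 + δ) * (Fintype.card α * (A.card * p + (A.card * p) ^ 2)) := by
        simp_rw [← Finset.mul_sum, Finset.sum_add_distrib, Finset.sum_const, nsmul_eq_mul]
        rw [Finset.sum_congr rfl fun a ha ↦ by rw [Finset.sum_ite_eq, if_pos ha],
          Finset.sum_const, nsmul_eq_mul]
        ring

lemma sum_sq_coverCount_sub_le (h : IsPseudorandom D X p δ) (hA : A ⊆ X) (hp : 0 ≤ p)
    (hδ : 0 ≤ δ) :
    ∑ u, (coverCount D A u - A.card * p) ^ 2 ≤
      Fintype.card α * ((1 + δ) * (A.card * p) + 3 * δ * (A.card * p) ^ 2) := by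
  have hexpand : ∑ u, (coverCount D A u - A.card * p) ^ 2 =
      ∑ u, coverCount D A u ^ 2 - 2 * (A.card * p) * ∑ u, coverCount D A u +
        Fintype.card α * (A.card * p) ^ 2 := by
    simp_rw [sub_sq, mul_right_comm _ _ (A.card * p), Finset.sum_add_distrib,
      Finset.sum_sub_distrib, ← Finset.mul_sum, Finset.sum_const, Finset.card_univ, nsmul_eq_mul]
  have hlower := mul_le_mul_of_nonneg_left (h.mul_le_sum_coverCount hA)
    (show 0 ≤ 2 * (A.card * p) by positivity)
  rw [hexpand]
  linarith [h.sum_sq_coverCount_le hA hδ]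

end IsPseudorandom

lemma sq_sum_sum_le_card_mul {ι β : Type*} [Fintype β] {J : Finset ι} {x : ι → β → ℝ} {a b c : ℝ}
    (hdiag : ∀ j ∈ J, ∑ u, x j u ^ 2 ≤ a * ∑ u, x j u + b)
    (hoff : ∀ j ∈ J, ∀ k ∈ J, j ≠ k → ∑ u, x j u * x k u ≤ c) (hc : 0 ≤ c) :
    (∑ j ∈ J, ∑ u, x j u) ^ 2 ≤
      Fintype.card β * (a * ∑ j ∈ J, ∑ u, x j u + J.card * b + J.card ^ 2 * c) := by
  classical
  have hentry : ∀ j ∈ J, ∀ k ∈ J,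
      ∑ u, x j u * x k u ≤ (if j = k then a * ∑ u, x j u + b else 0) + c := by
    intro j hj k hk
    split_ifs with hjk
    · simpa only [hjk, ← sq] using (hdiag k (hjk ▸ hj)).trans (le_add_of_nonneg_right hc)
    · simpa only [zero_add] using hoff j hj k hk hjk
  have hsq : ∑ u, (∑ j ∈ J, x j u) ^ 2 = ∑ j ∈ J, ∑ k ∈ J, ∑ u, x j u * x k u := by
    simp_rw [sq, Finset.sum_mul_sum]
    rw [Finset.sum_comm]
    exact Finset.sum_congr rfl fun j _ ↦ Finset.sum_comm
  calc (∑ j ∈ J, ∑ u, x j u) ^ 2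
      ≤ Fintype.card β * ∑ u, (∑ j ∈ J, x j u) ^ 2 := by
        rw [Finset.sum_comm]
        exact sq_sum_le_card_mul_sum_sq
    _ ≤ Fintype.card β * ∑ j ∈ J, ∑ k ∈ J, ((if j = k then a * ∑ u, x j u + b else 0) + c) := by
        rw [hsq]
        gcongr with j hj k hk
        exact hentry j hj k hk
    _ = _ := by
        simp_rw [Finset.sum_add_distrib, Finset.sum_const, nsmul_eq_mul]
        rw [Finset.sum_congr rfl fun j hj ↦ by rw [Finset.sum_ite_eq, if_pos hj],
          Finset.sum_add_distrib, ← Finset.mul_sum, Finset.sum_const, nsmul_eq_mul]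
        ring

section Majority

variable [DecidableEq V] [Fintype α] {D N : V → Finset α} {X A : Finset V} {p : ℝ} {r : ℕ}

lemma IsPseudorandom.sum_sq_coverCount_sub_le_div (h : IsPseudorandom D X p (1 / (20 * r)))
    (hA : A ⊆ X) (hr : 0 < r) (hp : 0 ≤ p) (hlarge : 384 * r ≤ A.card * p) :
    ∑ u, (coverCount D A u - A.card * p) ^ 2 ≤
      Fintype.card α * (A.card * p) ^ 2 / (5 * r) := by
  have hr1 : (1 : ℝ) ≤ r := mod_cast hr
  set t := A.card * p
  have hlin : t ≤ t ^ 2 / (384 * r) := by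
    rw [le_div_iff₀ (by positivity)]
    nlinarith
  have hδ : 1 / (20 * (r : ℝ)) ≤ 1 / 20 := by gcongr; linarith
  calc ∑ u, (coverCount D A u - t) ^ 2
      ≤ Fintype.card α * ((1 + 1 / (20 * r)) * t + 3 * (1 / (20 * r)) * t ^ 2) :=
        h.sum_sq_coverCount_sub_le hA hp (by positivity)
    _ ≤ Fintype.card α * ((1 + 1 / 20) * (t ^ 2 / (384 * r)) + 3 * (1 / (20 * r)) * t ^ 2) := by
        gcongr
    _ = (1 + 1 / 20) / 384 * (Fintype.card α * t ^ 2 / r)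
          + 3 / 20 * (Fintype.card α * t ^ 2 / r) := by ring
    _ ≤ 1 / 5 * (Fintype.card α * t ^ 2 / r) := by
        have : 0 ≤ Fintype.card α * t ^ 2 / r := by positivity
        linarith
    _ = Fintype.card α * t ^ 2 / (5 * r) := by field_simp

lemma IsPseudorandom.sum_sq_coverCount_le_add (h : IsPseudorandom D X p (1 / (20 * r)))
    (hA : A ⊆ X) (hND : ∀ a ∈ A, N a ⊆ D a) (hr : 0 < r) (hp : 0 ≤ p)
    (hlarge : 384 * r ≤ A.card * p) :
    ∑ u, coverCount N A u ^ 2 ≤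
      4 / 3 * (A.card * p) * ∑ u, coverCount N A u +
        4 / 3 * (Fintype.card α * (A.card * p) ^ 2 / (5 * r)) := by
  linarith [sum_sq_coverCount_le_of_subset hND (A.card * p),
    h.sum_sq_coverCount_sub_le_div hA hr hp hlarge]

lemma IsPseudorandom.mul_le_mul_sum_coverCount (h : IsPseudorandom D X p (1 / (20 * r)))
    (hA : A ⊆ X) (hmaj : ∀ a ∈ A, (D a).card ≤ r * (N a).card) (hr : 0 < r) (hp : 0 ≤ p) :
    19 / 20 * (Fintype.card α * (A.card * p)) ≤ r * ∑ u, coverCount N A u := by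
  have hr1 : (1 : ℝ) ≤ r := mod_cast hr
  have hδ : 1 / (20 * (r : ℝ)) ≤ 1 / 20 := by gcongr; linarith
  calc 19 / 20 * (Fintype.card α * (A.card * p))
      ≤ (1 - 1 / (20 * (r : ℝ))) * (Fintype.card α * (A.card * p)) := by gcongr; linarith
    _ ≤ ∑ a ∈ A, ((D a).card : ℝ) := sum_coverCount D A ▸ h.mul_le_sum_coverCount hA
    _ ≤ ∑ a ∈ A, (r * (N a).card : ℝ) := Finset.sum_le_sum fun a ha ↦ mod_cast hmaj a ha
    _ = r * ∑ u, coverCount N A u := by rw [sum_coverCount, Finset.mul_sum]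

lemma IsPseudorandom.mul_le_sum_sum_coverCount (h : IsPseudorandom D X p (1 / (20 * r)))
    (hmaj : ∀ a ∈ X, (D a).card ≤ r * (N a).card) (hr : 0 < r) (hp : 0 ≤ p) {s : ℕ}
    {𝒜 : Finset (Finset V)} (h𝒜 : 𝒜.card = 3 * r) (hsub : ∀ A ∈ 𝒜, A ⊆ X)
    (hcard : ∀ A ∈ 𝒜, A.card = s) :
    57 / 20 * (Fintype.card α * (s * p)) ≤ ∑ A ∈ 𝒜, ∑ u, coverCount N A u := by
  refine le_of_mul_le_mul_left ?_ (show (0 : ℝ) < r by positivity)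
  calc r * (57 / 20 * (Fintype.card α * (s * p)))
      = ∑ A ∈ 𝒜, 19 / 20 * (Fintype.card α * (s * p)) := by
        rw [Finset.sum_const, h𝒜, nsmul_eq_mul]; push_cast; ring
    _ ≤ ∑ A ∈ 𝒜, r * ∑ u, coverCount N A u := Finset.sum_le_sum fun A hA ↦ by
        simpa only [hcard A hA] using h.mul_le_mul_sum_coverCount (hsub A hA)
          (fun a ha ↦ hmaj a (hsub A hA ha)) hr hp
    _ = r * ∑ A ∈ 𝒜, ∑ u, coverCount N A u := (Finset.mul_sum ..).symm

theorem IsPseudorandom.exists_lt_card_inter [Nonempty α]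
    (h : IsPseudorandom D X p (1 / (20 * r))) (hND : ∀ a ∈ X, N a ⊆ D a)
    (hmaj : ∀ a ∈ X, (D a).card ≤ r * (N a).card) (hr : 0 < r) (hp : 0 < p) {s : ℕ}
    (hs : 384 * r ≤ s * p) {𝒜 : Finset (Finset V)} (h𝒜 : 𝒜.card = 3 * r)
    (hsub : ∀ A ∈ 𝒜, A ⊆ X) (hcard : ∀ A ∈ 𝒜, A.card = s) :
    ∃ A ∈ 𝒜, ∃ B ∈ 𝒜, A ≠ B ∧ ∃ a ∈ A, ∃ b ∈ B,
      Fintype.card α * p ^ 2 / (50 * r : ℝ) ^ 4 < (N a ∩ N b).card := by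
  by_contra! hsmall
  have hr1 : (1 : ℝ) ≤ r := mod_cast hr
  set n : ℝ := (Fintype.card α : ℝ)
  set t : ℝ := s * p
  have hn : 0 < n := Nat.cast_pos.2 Fintype.card_pos
  have ht : 0 < t := by linarith
  have hcross : ∀ A ∈ 𝒜, ∀ B ∈ 𝒜, A ≠ B →
      ∑ u, coverCount N A u * coverCount N B u ≤ n * t ^ 2 / (50 * r) ^ 4 := by
    intro A hA B hB hAB
    refine (sum_coverCount_mul_le (hsmall A hA B hB hAB)).trans_eq ?_
    rw [hcard A hA, hcard B hB]
    ring
  have hdiag : ∀ A ∈ 𝒜, ∑ u, coverCount N A u ^ 2 ≤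
      4 / 3 * t * ∑ u, coverCount N A u + 4 / 3 * (n * t ^ 2 / (5 * r)) := fun A hA ↦ by
    simpa only [hcard A hA] using h.sum_sq_coverCount_le_add (hsub A hA)
      (fun a ha ↦ hND a (hsub A hA ha)) hr hp.le (by rwa [hcard A hA])
  set M := ∑ A ∈ 𝒜, ∑ u, coverCount N A u
  have hM : 57 / 20 * (n * t) ≤ M := h.mul_le_sum_sum_coverCount hmaj hr hp.le h𝒜 hsub hcard
  have hM_sq : M ^ 2 ≤ n * (4 / 3 * t * M + n * t ^ 2) := by
    refine (sq_sum_sum_le_card_mul hdiag hcross (by positivity)).trans ?_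
    have hcross_total : (3 * r : ℝ) ^ 2 * (n * t ^ 2 / (50 * r) ^ 4) ≤ 1 / 5 * (n * t ^ 2) := by
      have : (3 * r : ℝ) ^ 2 ≤ 1 / 5 * (50 * r) ^ 4 := by
        have : (1 : ℝ) ≤ r ^ 2 := one_le_pow₀ hr1
        nlinarith
      rw [mul_div_assoc', div_le_iff₀ (by positivity)]
      nlinarith [mul_le_mul_of_nonneg_right this (show 0 ≤ n * t ^ 2 by positivity)]
    have hdiag_total : (3 * r : ℝ) * (4 / 3 * (n * t ^ 2 / (5 * r))) = 4 / 5 * (n * t ^ 2) := by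
      field_simp
    rw [h𝒜]
    push_cast
    exact mul_le_mul_of_nonneg_left (by linarith) hn.le
  have : 0 < n * t := by positivity
  nlinarith [mul_le_mul hM hM (by positivity) (by linarith)]

end Majority

end Counting

section AuxGraph

open Classical in
/-- The vertices outside `W` adjacent in `G` to every vertex of `T`. -/
noncomputable def commonNbhd {V : Type*} [Fintype V] (G : SimpleGraph V) (W T : Finset V) :
    Finset V := {u | u ∉ W ∧ ∀ v ∈ T, G.Adj v u}

lemma mem_commonNbhd {V : Type*} [Fintype V] {G : SimpleGraph V} {W T : Finset V} {u : V} :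
    u ∈ commonNbhd G W T ↔ u ∉ W ∧ ∀ v ∈ T, G.Adj v u := by
  simp only [commonNbhd, Finset.mem_filter_univ]

lemma commonNbhd_inter {V : Type*} [Fintype V] [DecidableEq V] (G : SimpleGraph V)
    (W T T' : Finset V) :
    commonNbhd G W T ∩ commonNbhd G W T' = commonNbhd G W (T ∪ T') := by
  ext u
  simp only [Finset.mem_inter, mem_commonNbhd, Finset.mem_union, or_imp, forall_and]
  tauto

variable {n r : ℕ} {G : SimpleGraph (Fin n)} {c : Sym2 (Fin n) → Fin r} {W : Finset (Fin n)}
  {f : Fin n → Fin r} {i : Fin r}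

lemma auxGraph_adj {thr : ℝ} {v w : Fin n} :
    (auxGraph G c W f i thr).Adj v w ↔ v ≠ w ∧ v ∈ W ∧ w ∈ W ∧ f v = i ∧ f w = i ∧
      thr ≤ (coloredNbhd G c i v (W : Set (Fin n))ᶜ ∩
        coloredNbhd G c i w (W : Set (Fin n))ᶜ).ncard := by
  rw [auxGraph, SimpleGraph.fromRel_adj,
    Set.inter_comm (coloredNbhd G c i w (W : Set (Fin n))ᶜ)]
  tauto

lemma commonNbhd_singleton_eq_iUnion (v : Fin n) :
    (commonNbhd G W {v} : Set (Fin n)) = ⋃ j, coloredNbhd G c j v (W : Set (Fin n))ᶜ := by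
  ext u
  simp [mem_commonNbhd, coloredNbhd]

lemma IsMajorityPartition.card_commonNbhd_le (h : IsMajorityPartition G c W f) {v : Fin n}
    (hv : v ∈ W) :
    (commonNbhd G W {v}).card ≤ r * (coloredNbhd G c (f v) v (W : Set (Fin n))ᶜ).ncard :=
  calc (commonNbhd G W {v}).card
      = (⋃ j, coloredNbhd G c j v (W : Set (Fin n))ᶜ).ncard := by
        rw [← commonNbhd_singleton_eq_iUnion, Set.ncard_coe_finset]
    _ ≤ ∑ j, (coloredNbhd G c j v (W : Set (Fin n))ᶜ).ncard := Set.ncard_iUnion_le_of_fintype _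
    _ ≤ ∑ _j : Fin r, (coloredNbhd G c (f v) v (W : Set (Fin n))ᶜ).ncard :=
        Finset.sum_le_sum fun j _ ↦ h v hv j
    _ = r * (coloredNbhd G c (f v) v (W : Set (Fin n))ᶜ).ncard := by simp

lemma IsMajorityPartition.card_ne_of_isNonadjacentFamily [NeZero n]
    (hf : IsMajorityPartition G c W f) {p : ℝ} (hp : 0 < p)
    (hW : IsPseudorandom (fun v ↦ commonNbhd G W {v}) W p (1 / (20 * r)))
    {s : ℕ} (hs : 384 * r ≤ s * p) {𝒜 : Finset (Finset (Fin n))}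
    (h𝒜 : IsNonadjacentFamily (auxGraph G c W f i (n * p ^ 2 / (50 * r : ℝ) ^ 4))
      (W.filter (f · = i)) s 𝒜) :
    𝒜.card ≠ 3 * r := by
  classical
  intro hcard
  let N : Fin n → Finset (Fin n) := fun v ↦ (coloredNbhd G c i v (W : Set (Fin n))ᶜ).toFinset
  have hND : ∀ v ∈ W.filter (f · = i), N v ⊆ commonNbhd G W {v} := fun v _ ↦ by
    rw [Set.toFinset_subset, commonNbhd_singleton_eq_iUnion (c := c)]
    exact Set.subset_iUnion_of_subset i subset_rfl
  have hmaj : ∀ v ∈ W.filter (f · = i), (commonNbhd G W {v}).card ≤ r * (N v).card := by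
    intro v hv
    obtain ⟨hvW, rfl⟩ := Finset.mem_filter.1 hv
    simpa only [N, Set.ncard_eq_toFinset_card'] using hf.card_commonNbhd_le hvW
  obtain ⟨A, hA, B, hB, hAB, a, ha, b, hb, hlt⟩ :=
    (hW.mono (Finset.filter_subset (f · = i) W)).exists_lt_card_inter hND hmaj i.pos hp hs hcard
      h𝒜.subset h𝒜.card_eq
  have hab : a ≠ b := Finset.disjoint_iff_ne.1 (h𝒜.pairwiseDisjoint hA hB hAB) a ha b hb
  obtain ⟨haW, hfa⟩ := Finset.mem_filter.1 (h𝒜.subset A hA ha)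
  obtain ⟨hbW, hfb⟩ := Finset.mem_filter.1 (h𝒜.subset B hB hb)
  refine h𝒜.not_adj hA hB hAB a ha b hb (auxGraph_adj.2 ⟨hab, haW, hbW, hfa, hfb, ?_⟩)
  rw [Set.ncard_eq_toFinset_card', Set.toFinset_inter]
  simpa only [Fintype.card_fin] using hlt.le

theorem IsMajorityPartition.hasCycleCover_auxGraph [NeZero n] (hf : IsMajorityPartition G c W f)
    {p : ℝ} (hp : 0 < p) (hW : IsPseudorandom (fun v ↦ commonNbhd G W {v}) W p (1 / (20 * r)))
    (i : Fin r) :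
    HasCycleCover (auxGraph G c W f i (n * p ^ 2 / (50 * r : ℝ) ^ 4)) {v | v ∈ W ∧ f v = i}
      (3 * r - 1) (18 * r ^ 2 * (384 * r) / p + (3 * r) ^ 3) := by
  have hr : 1 ≤ r := i.pos
  have hr' : (1 : ℝ) ≤ r := mod_cast hr
  set s := ⌈384 * r / p⌉₊
  have hs : 384 * r ≤ s * p := (div_le_iff₀ hp).1 (Nat.le_ceil _)
  have hs_pos : 0 < s := Nat.ceil_pos.2 (by positivity)
  have hcover := hasCycleCover_of_isNonadjacentFamily (k := 3 * r - 1) hs_pos fun 𝒜 h𝒜 ↦ by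
    rw [Nat.sub_add_cancel (by lia)]
    exact hf.card_ne_of_isNonadjacentFamily (i := i) hp hW hs h𝒜
  rw [Finset.coe_filter] at hcover
  refine hcover.mono ?_
  have hs_le : (s : ℝ) ≤ 384 * r / p + 1 := (Nat.ceil_lt_add_one (by positivity)).le
  calc (2 * ((3 * r - 1 : ℕ) : ℝ) + 1) * s
      ≤ 6 * r * (384 * r / p + 1) := by
        gcongr
        rw [Nat.cast_sub (by lia)]
        push_cast
        linarith
    _ = 6 * r * 1 * (384 * r / p) + 6 * r * 1 := by ring
    _ ≤ 18 * r * r * (384 * r / p) + 27 * r * r ^ 2 := by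
        gcongr
        · norm_num
        · norm_num
        · exact one_le_pow₀ hr'
    _ = 18 * r ^ 2 * (384 * r) / p + (3 * r) ^ 3 := by ring

end AuxGraph

section Chernoff

open ProbabilityTheory

lemma exp_mul_indicator_one {Ω : Type*} (A : Set Ω) (t : ℝ) (ω : Ω) :
    Real.exp (t * A.indicator (fun _ ↦ 1) ω) =
      1 + A.indicator (fun _ ↦ Real.exp t - 1) ω := by
  by_cases hω : ω ∈ A <;> simp [hω]

variable {Ω ι : Type*} [MeasurableSpace Ω] {μ : Measure Ω} {A : Set Ω} {E : ι → Set Ω}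

lemma integrable_exp_mul_indicator_one [IsFiniteMeasure μ] (hA : MeasurableSet A) (t : ℝ) :
    Integrable (fun ω ↦ Real.exp (t * A.indicator (fun _ ↦ 1) ω)) μ := by
  simp_rw [exp_mul_indicator_one]
  exact (integrable_const 1).add ((integrable_const _).indicator hA)

lemma mgf_indicator_one [IsProbabilityMeasure μ] (hA : MeasurableSet A) (t : ℝ) :
    mgf (A.indicator fun _ ↦ 1) μ t = 1 + (Real.exp t - 1) * μ.real A := by
  simp_rw [mgf, exp_mul_indicator_one]
  rw [integral_add (integrable_const 1) ((integrable_const _).indicator hA),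
    integral_indicator_const _ hA]
  simp [mul_comm]

lemma mgf_sum_indicator_le (h : iIndepSet E μ) (hE : ∀ i, MeasurableSet (E i)) (s : Finset ι)
    (t : ℝ) :
    mgf (∑ i ∈ s, (E i).indicator fun _ ↦ 1) μ t ≤
      Real.exp ((Real.exp t - 1) * ∑ i ∈ s, μ.real (E i)) := by
  have := h.isProbabilityMeasure
  rw [h.iIndepFun_indicator.mgf_sum fun i ↦ measurable_const.indicator (hE i), Finset.mul_sum,
    Real.exp_sum]
  refine Finset.prod_le_prod (fun i _ ↦ mgf_nonneg) fun i _ ↦ ?_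
  rw [mgf_indicator_one (hE i), add_comm]
  exact Real.add_one_le_exp _

lemma integrable_exp_mul_sum_indicator (h : iIndepSet E μ) (hE : ∀ i, MeasurableSet (E i))
    (s : Finset ι) (t : ℝ) :
    Integrable (fun ω ↦ Real.exp (t * (∑ i ∈ s, (E i).indicator fun _ ↦ 1) ω)) μ := by
  have := h.isProbabilityMeasure
  exact h.iIndepFun_indicator.integrable_exp_mul_sum
    (fun i ↦ measurable_const.indicator (hE i)) fun i _ ↦ integrable_exp_mul_indicator_one (hE i) t

lemma exp_sub_one_le_add_sq {t : ℝ} (ht : |t| ≤ 1) : Real.exp t - 1 ≤ t + t ^ 2 := by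
  linarith [(abs_le.1 (Real.abs_exp_sub_one_sub_id_le ht)).2]

variable {s : Finset ι} {δ : ℝ}

lemma chernoff_upper (h : iIndepSet E μ) (hE : ∀ i, MeasurableSet (E i)) (hδ₀ : 0 ≤ δ)
    (hδ₁ : δ ≤ 1) :
    μ.real {ω | (1 + δ) * ∑ i ∈ s, μ.real (E i) ≤ (∑ i ∈ s, (E i).indicator fun _ ↦ (1 : ℝ)) ω} ≤
      Real.exp (-(δ ^ 2 * (∑ i ∈ s, μ.real (E i)) / 4)) := by
  have := h.isProbabilityMeasure
  set m := ∑ i ∈ s, μ.real (E i)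
  have : 0 ≤ m := Finset.sum_nonneg fun i _ ↦ measureReal_nonneg
  refine (measure_ge_le_exp_mul_mgf _ (by positivity : 0 ≤ δ / 2)
    (integrable_exp_mul_sum_indicator h hE s _)).trans ?_
  calc Real.exp (-(δ / 2) * ((1 + δ) * m)) * mgf (∑ i ∈ s, (E i).indicator fun _ ↦ 1) μ (δ / 2)
      ≤ Real.exp (-(δ / 2) * ((1 + δ) * m)) * Real.exp ((Real.exp (δ / 2) - 1) * m) := by
        gcongr
        exact mgf_sum_indicator_le h hE s _
    _ ≤ Real.exp (-(δ / 2) * ((1 + δ) * m)) * Real.exp ((δ / 2 + (δ / 2) ^ 2) * m) := by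
        gcongr
        exact exp_sub_one_le_add_sq (by rw [abs_of_nonneg (by positivity)]; linarith)
    _ = Real.exp (-(δ ^ 2 * m / 4)) := by rw [← Real.exp_add]; ring_nf

lemma chernoff_lower (h : iIndepSet E μ) (hE : ∀ i, MeasurableSet (E i)) (hδ₀ : 0 ≤ δ)
    (hδ₁ : δ ≤ 1) :
    μ.real {ω | (∑ i ∈ s, (E i).indicator fun _ ↦ (1 : ℝ)) ω ≤ (1 - δ) * ∑ i ∈ s, μ.real (E i)} ≤
      Real.exp (-(δ ^ 2 * (∑ i ∈ s, μ.real (E i)) / 4)) := by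
  have := h.isProbabilityMeasure
  set m := ∑ i ∈ s, μ.real (E i)
  have : 0 ≤ m := Finset.sum_nonneg fun i _ ↦ measureReal_nonneg
  refine (measure_le_le_exp_mul_mgf _ (by linarith : -(δ / 2) ≤ 0)
    (integrable_exp_mul_sum_indicator h hE s _)).trans ?_
  calc Real.exp (- -(δ / 2) * ((1 - δ) * m)) *
        mgf (∑ i ∈ s, (E i).indicator fun _ ↦ 1) μ (-(δ / 2))
      ≤ Real.exp (- -(δ / 2) * ((1 - δ) * m)) * Real.exp ((Real.exp (-(δ / 2)) - 1) * m) := by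
        gcongr
        exact mgf_sum_indicator_le h hE s _
    _ ≤ Real.exp (- -(δ / 2) * ((1 - δ) * m)) * Real.exp ((-(δ / 2) + (-(δ / 2)) ^ 2) * m) := by
        gcongr
        exact exp_sub_one_le_add_sq (by rw [abs_neg, abs_of_nonneg (by positivity)]; linarith)
    _ = Real.exp (-(δ ^ 2 * m / 4)) := by rw [← Real.exp_add]; ring_nf

end Chernoff

section RandomGraph

open ProbabilityTheory

lemma isProbabilityMeasure_bernoulliM {q : ℝ} (hq₀ : 0 ≤ q) (hq₁ : q ≤ 1) :
    IsProbabilityMeasure (bernoulliM q) := by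
  constructor
  simp [bernoulliM, ← ENNReal.ofReal_add hq₀ (sub_nonneg.2 hq₁)]

lemma isProbabilityMeasure_gnp (n : ℕ) {q : ℝ} (hq₀ : 0 ≤ q) (hq₁ : q ≤ 1) :
    IsProbabilityMeasure (gnp n q) := by
  have := isProbabilityMeasure_bernoulliM hq₀ hq₁
  exact Measure.pi.instIsProbabilityMeasure _

variable {n : ℕ} {q δ : ℝ} {W T T' : Finset (Fin n)}

lemma graphOf_adj {ω : Sym2 (Fin n) → Bool} {u v : Fin n} :
    (graphOf ω).Adj u v ↔ u ≠ v ∧ ω s(u, v) = true := by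
  rw [graphOf, SimpleGraph.fromRel_adj, Sym2.eq_swap (a := v), or_self]

lemma card_image_sym2Mk_product (h : Disjoint T T') :
    ((T ×ˢ T').image fun x ↦ s(x.1, x.2)).card = T.card * T'.card := by
  rw [Finset.card_image_of_injOn, Finset.card_product]
  rintro ⟨a, b⟩ hab ⟨a', b'⟩ hab' heq
  rw [Finset.mem_coe, Finset.mem_product] at hab hab'
  rcases Sym2.eq_iff.1 heq with ⟨rfl, rfl⟩ | ⟨rfl, rfl⟩
  · rfl
  · exact absurd hab'.2 (Finset.disjoint_left.1 h hab.1)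

lemma gnp_forall_adj (hq₀ : 0 ≤ q) (hq₁ : q ≤ 1) (h : Disjoint T T') :
    gnp n q {ω | ∀ v ∈ T, ∀ u ∈ T', (graphOf ω).Adj v u} =
      ENNReal.ofReal q ^ (T.card * T'.card) := by
  have := isProbabilityMeasure_bernoulliM hq₀ hq₁
  have hset : {ω | ∀ v ∈ T, ∀ u ∈ T', (graphOf ω).Adj v u} =
      (((T ×ˢ T').image fun x ↦ s(x.1, x.2) : Finset _) : Set (Sym2 (Fin n))).pi
        fun _ ↦ {true} := by
    ext ω
    simp only [graphOf_adj, Set.mem_ofPred_eq, Set.mem_pi, Finset.coe_image, Set.forall_mem_image,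
      Finset.mem_coe, Finset.mem_product, Set.mem_singleton_iff, Prod.forall]
    exact ⟨fun hω v u huv ↦ (hω v huv.1 u huv.2).2,
      fun hω v hv u hu ↦ ⟨Finset.disjoint_iff_ne.1 h v hv u hu, hω v u ⟨hv, hu⟩⟩⟩
  rw [hset, gnp, Measure.pi_pi_finset, Finset.prod_const, card_image_sym2Mk_product h]
  simp [bernoulliM]

lemma gnp_forall_adj_left (hq₀ : 0 ≤ q) (hq₁ : q ≤ 1) {u : Fin n} (hu : u ∉ T) :
    gnp n q {ω | ∀ v ∈ T, (graphOf ω).Adj v u} = ENNReal.ofReal q ^ T.card := by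
  simpa using gnp_forall_adj hq₀ hq₁ (Finset.disjoint_singleton_right.2 hu)

lemma iIndepSet_forall_adj (hq₀ : 0 ≤ q) (hq₁ : q ≤ 1) (hT : T ⊆ W) :
    iIndepSet (fun u : {u // u ∉ W} ↦ {ω | ∀ v ∈ T, (graphOf ω).Adj v u}) (gnp n q) := by
  rw [iIndepSet_iff_meas_biInter fun _ ↦ .of_discrete]
  intro s
  have hinter : ⋂ u ∈ s, {ω | ∀ v ∈ T, (graphOf ω).Adj v (u : Fin n)} =
      {ω | ∀ v ∈ T, ∀ u ∈ s.map (.subtype (· ∉ W)), (graphOf ω).Adj v u} := by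
    ext ω
    simp only [Set.mem_iInter, Set.mem_ofPred_eq, Finset.mem_map, forall_exists_index, and_imp,
      Function.Embedding.subtype_apply, forall_apply_eq_imp_iff₂]
    tauto
  have hdisj : Disjoint T (s.map (.subtype (· ∉ W))) := Finset.disjoint_right.2 fun u hu hT' ↦ by
    obtain ⟨v, -, rfl⟩ := Finset.mem_map.1 hu
    exact v.2 (hT hT')
  rw [hinter, gnp_forall_adj hq₀ hq₁ hdisj, Finset.card_map, pow_mul]
  exact (Finset.prod_eq_pow_card fun u _ ↦ gnp_forall_adj_left hq₀ hq₁ fun hu ↦ u.2 (hT hu)).symm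

lemma card_commonNbhd_eq_sum_indicator (ω : Sym2 (Fin n) → Bool) :
    ((commonNbhd (graphOf ω) W T).card : ℝ) =
      (∑ u : {u // u ∉ W}, {ω | ∀ v ∈ T, (graphOf ω).Adj v u}.indicator fun _ ↦ (1 : ℝ)) ω := by
  classical
  simp_rw [Finset.sum_apply, Set.indicator_apply, Set.mem_ofPred_eq]
  rw [← Finset.sum_subtype (Finset.univ.filter (· ∉ W)) (by simp)
    fun u ↦ if ∀ v ∈ T, (graphOf ω).Adj v u then (1 : ℝ) else 0, Finset.sum_boole,
    Finset.filter_filter]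
  refine congrArg (fun t : Finset (Fin n) ↦ (t.card : ℝ)) ?_
  ext u
  simp [mem_commonNbhd]

lemma sum_gnp_real_forall_adj (hq₀ : 0 ≤ q) (hq₁ : q ≤ 1) (hT : T ⊆ W) :
    ∑ u : {u // u ∉ W}, (gnp n q).real {ω | ∀ v ∈ T, (graphOf ω).Adj v u} =
      (n - W.card) * q ^ T.card := by
  have hprob (u : {u // u ∉ W}) :
      (gnp n q).real {ω | ∀ v ∈ T, (graphOf ω).Adj v u} = q ^ T.card := by
    rw [measureReal_def, gnp_forall_adj_left hq₀ hq₁ fun hu ↦ u.2 (hT hu), ENNReal.toReal_pow,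
      ENNReal.toReal_ofReal hq₀]
  simp_rw [hprob, Finset.sum_const, Finset.card_univ, Fintype.card_subtype_compl, nsmul_eq_mul,
    Fintype.card_coe, Fintype.card_fin]
  rw [Nat.cast_sub (by simpa using W.card_le_univ)]

lemma gnp_real_le_card_commonNbhd_le (hq₀ : 0 ≤ q) (hq₁ : q ≤ 1) (hT : T ⊆ W) (hδ₀ : 0 ≤ δ)
    (hδ₁ : δ ≤ 1) :
    (gnp n q).real
        {ω | (1 + δ) * ((n - W.card) * q ^ T.card) ≤ (commonNbhd (graphOf ω) W T).card} ≤
      Real.exp (-(δ ^ 2 * ((n - W.card) * q ^ T.card) / 4)) := by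
  simp_rw [card_commonNbhd_eq_sum_indicator, ← sum_gnp_real_forall_adj hq₀ hq₁ hT]
  exact chernoff_upper (iIndepSet_forall_adj hq₀ hq₁ hT) (fun _ ↦ .of_discrete) hδ₀ hδ₁

lemma gnp_real_card_commonNbhd_le_le (hq₀ : 0 ≤ q) (hq₁ : q ≤ 1) (hT : T ⊆ W) (hδ₀ : 0 ≤ δ)
    (hδ₁ : δ ≤ 1) :
    (gnp n q).real
        {ω | (commonNbhd (graphOf ω) W T).card ≤ (1 - δ) * ((n - W.card) * q ^ T.card)} ≤
      Real.exp (-(δ ^ 2 * ((n - W.card) * q ^ T.card) / 4)) := by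
  simp_rw [card_commonNbhd_eq_sum_indicator, ← sum_gnp_real_forall_adj hq₀ hq₁ hT]
  exact chernoff_lower (iIndepSet_forall_adj hq₀ hq₁ hT) (fun _ ↦ .of_discrete) hδ₀ hδ₁

lemma mul_sq_le_two_mul_sub_mul_pow {x y : ℝ} {k : ℕ} (hx : 0 ≤ x) (hy : 2 * y ≤ x) (hq₀ : 0 ≤ q)
    (hq₁ : q ≤ 1) (hk : k ≤ 2) : x * q ^ 2 ≤ 2 * ((x - y) * q ^ k) :=
  calc x * q ^ 2 ≤ x * q ^ k := mul_le_mul_of_nonneg_left (pow_le_pow_of_le_one hq₀ hq₁ hk) hx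
    _ ≤ 2 * (x - y) * q ^ k := by gcongr; linarith
    _ = 2 * ((x - y) * q ^ k) := mul_assoc _ _ _

lemma gnp_real_card_commonNbhd_singleton_lt_le (hq₀ : 0 ≤ q) (hq₁ : q ≤ 1) (hδ₀ : 0 ≤ δ)
    (hδ₁ : δ ≤ 1) (hW : W.card ≤ δ / 2 * n) {a : Fin n} (ha : a ∈ W) :
    (gnp n q).real {ω | (commonNbhd (graphOf ω) W {a}).card < (1 - δ) * (n * q)} ≤
      Real.exp (-(δ ^ 2 * (n * q ^ 2) / 32)) := by
  have := isProbabilityMeasure_gnp n hq₀ hq₁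
  have hmean : (1 - δ) * (n * q) ≤ (1 - δ / 2) * ((n - W.card) * q) :=
    calc (1 - δ) * (n * q) ≤ (1 - δ / 2) * (n - δ / 2 * n) * q := by
          rw [← mul_assoc]
          refine mul_le_mul_of_nonneg_right ?_ hq₀
          linarith [mul_nonneg (sq_nonneg δ) (n.cast_nonneg (α := ℝ))]
      _ ≤ (1 - δ / 2) * (n - W.card) * q := by gcongr; linarith
      _ = (1 - δ / 2) * ((n - W.card) * q) := mul_assoc _ _ _
  have hexp : n * q ^ 2 ≤ 2 * ((n - W.card) * q ^ 1) :=
    mul_sq_le_two_mul_sub_mul_pow n.cast_nonneg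
      (by linarith [mul_le_mul_of_nonneg_right hδ₁ (n.cast_nonneg (α := ℝ))]) hq₀ hq₁ one_le_two
  calc (gnp n q).real {ω | (commonNbhd (graphOf ω) W {a}).card < (1 - δ) * (n * q)}
      ≤ (gnp n q).real {ω | (commonNbhd (graphOf ω) W {a}).card ≤
          (1 - δ / 2) * ((n - W.card) * q ^ ({a} : Finset (Fin n)).card)} :=
        measureReal_mono fun ω hω ↦ by
          rw [Set.mem_ofPred_eq, Finset.card_singleton, pow_one]
          exact hω.le.trans hmean
    _ ≤ Real.exp (-((δ / 2) ^ 2 * ((n - W.card) * q ^ ({a} : Finset (Fin n)).card) / 4)) :=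
        gnp_real_card_commonNbhd_le_le hq₀ hq₁ (Finset.singleton_subset_iff.2 ha) (by linarith)
          (by linarith)
    _ ≤ Real.exp (-(δ ^ 2 * (n * q ^ 2) / 32)) := by
        rw [Finset.card_singleton, Real.exp_le_exp]
        linarith [mul_le_mul_of_nonneg_left hexp (sq_nonneg δ)]

lemma gnp_real_lt_card_commonNbhd_le (hq₀ : 0 ≤ q) (hq₁ : q ≤ 1) (hδ₀ : 0 ≤ δ) (hδ₁ : δ ≤ 1)
    (hW : W.card ≤ δ / 2 * n) (hT : T ⊆ W) (hT₂ : T.card ≤ 2) :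
    (gnp n q).real {ω | (1 + δ) * (n * q ^ T.card) < (commonNbhd (graphOf ω) W T).card} ≤
      Real.exp (-(δ ^ 2 * (n * q ^ 2) / 32)) := by
  have := isProbabilityMeasure_gnp n hq₀ hq₁
  have hmean : (n - W.card) * q ^ T.card ≤ n * q ^ T.card := by
    gcongr
    exact sub_le_self _ (Nat.cast_nonneg _)
  have hexp : n * q ^ 2 ≤ 2 * ((n - W.card) * q ^ T.card) :=
    mul_sq_le_two_mul_sub_mul_pow n.cast_nonneg
      (by linarith [mul_le_mul_of_nonneg_right hδ₁ (n.cast_nonneg (α := ℝ))]) hq₀ hq₁ hT₂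
  calc (gnp n q).real {ω | (1 + δ) * (n * q ^ T.card) < (commonNbhd (graphOf ω) W T).card}
      ≤ (gnp n q).real
          {ω | (1 + δ) * ((n - W.card) * q ^ T.card) ≤ (commonNbhd (graphOf ω) W T).card} :=
        measureReal_mono fun ω hω ↦ by
          exact (mul_le_mul_of_nonneg_left hmean (by linarith)).trans hω.le
    _ ≤ Real.exp (-(δ ^ 2 * ((n - W.card) * q ^ T.card) / 4)) :=
        gnp_real_le_card_commonNbhd_le hq₀ hq₁ hT hδ₀ hδ₁
    _ ≤ Real.exp (-(δ ^ 2 * (n * q ^ 2) / 32)) := by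
        rw [Real.exp_le_exp]
        linarith [mul_le_mul_of_nonneg_left hexp (sq_nonneg δ),
          mul_nonneg (sq_nonneg δ) (mul_nonneg n.cast_nonneg (sq_nonneg q))]

lemma gnp_real_not_isPseudorandom_le (hq₀ : 0 ≤ q) (hq₁ : q ≤ 1) (hδ₀ : 0 ≤ δ) (hδ₁ : δ ≤ 1)
    (hW : W.card ≤ δ / 2 * n) :
    (gnp n q).real {ω | ¬ IsPseudorandom (fun v ↦ commonNbhd (graphOf ω) W {v}) W q δ} ≤
      (W.card + W.card ^ 2) * Real.exp (-(δ ^ 2 * (n * q ^ 2) / 32)) := by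
  have := isProbabilityMeasure_gnp n hq₀ hq₁
  set ε := Real.exp (-(δ ^ 2 * (n * q ^ 2) / 32))
  let L (a : Fin n) : Set (Sym2 (Fin n) → Bool) :=
    {ω | (commonNbhd (graphOf ω) W {a}).card < (1 - δ) * (n * q)}
  let U (x : Fin n × Fin n) : Set (Sym2 (Fin n) → Bool) :=
    {ω | (1 + δ) * (n * q ^ ({x.1, x.2} : Finset (Fin n)).card) <
      (commonNbhd (graphOf ω) W {x.1, x.2}).card}
  have hsub : {ω | ¬ IsPseudorandom (fun v ↦ commonNbhd (graphOf ω) W {v}) W q δ} ⊆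
      (⋃ a ∈ W, L a) ∪ ⋃ x ∈ W ×ˢ W, U x := by
    intro ω hω
    contrapose! hω
    simp only [L, U, Set.mem_union, Set.mem_iUnion, Set.mem_ofPred_eq, Finset.mem_product,
      not_or, not_exists, not_lt, Prod.forall, and_imp] at hω
    refine not_not.2 ⟨fun a ha ↦ ?_, fun a ha b hb ↦ ?_⟩
    · simpa only [Fintype.card_fin] using hω.1 a ha
    · simpa only [commonNbhd_inter, ← Finset.insert_eq, Fintype.card_fin] using hω.2 a b ha hb
  calc (gnp n q).real {ω | ¬ IsPseudorandom (fun v ↦ commonNbhd (graphOf ω) W {v}) W q δ}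
      ≤ (gnp n q).real ((⋃ a ∈ W, L a) ∪ ⋃ x ∈ W ×ˢ W, U x) := measureReal_mono hsub
    _ ≤ (gnp n q).real (⋃ a ∈ W, L a) + (gnp n q).real (⋃ x ∈ W ×ˢ W, U x) :=
        measureReal_union_le _ _
    _ ≤ ∑ a ∈ W, (gnp n q).real (L a) + ∑ x ∈ W ×ˢ W, (gnp n q).real (U x) :=
        add_le_add (measureReal_biUnion_finset_le _ _) (measureReal_biUnion_finset_le _ _)
    _ ≤ ∑ _a ∈ W, ε + ∑ _x ∈ W ×ˢ W, ε := by
        refine add_le_add (Finset.sum_le_sum fun a ha ↦ ?_) (Finset.sum_le_sum fun x hx ↦ ?_)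
        · exact gnp_real_card_commonNbhd_singleton_lt_le hq₀ hq₁ hδ₀ hδ₁ hW ha
        · rw [Finset.mem_product] at hx
          exact gnp_real_lt_card_commonNbhd_le hq₀ hq₁ hδ₀ hδ₁ hW
            (Finset.insert_subset hx.1 (Finset.singleton_subset_iff.2 hx.2)) Finset.card_le_two
    _ = (W.card + W.card ^ 2) * ε := by
        simp only [Finset.sum_const, Finset.card_product, nsmul_eq_mul, Nat.cast_mul]
        ring

theorem one_sub_two_div_le_gnp_real_isPseudorandom [NeZero n] (hq₀ : 0 ≤ q) (hq₁ : q ≤ 1)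
    (hδ₀ : 0 ≤ δ) (hδ₁ : δ ≤ 1) (hW : W.card ≤ δ / 2 * n)
    (hlog : 96 * Real.log n ≤ δ ^ 2 * (n * q ^ 2)) :
    1 - 2 / (n : ℝ) ≤
      (gnp n q).real {ω | IsPseudorandom (fun v ↦ commonNbhd (graphOf ω) W {v}) W q δ} := by
  have := isProbabilityMeasure_gnp n hq₀ hq₁
  have hn : 0 < (n : ℝ) := Nat.cast_pos.2 (NeZero.pos n)
  have hWn : (W.card : ℝ) ≤ n := mod_cast W.card_le_univ.trans_eq (Fintype.card_fin n)
  have hn₁ : (1 : ℝ) ≤ n := Nat.one_le_cast.2 (NeZero.pos n)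
  have hfail : (gnp n q).real
      {ω | ¬ IsPseudorandom (fun v ↦ commonNbhd (graphOf ω) W {v}) W q δ} ≤ 2 / n :=
    calc (gnp n q).real {ω | ¬ IsPseudorandom (fun v ↦ commonNbhd (graphOf ω) W {v}) W q δ}
        ≤ (W.card + W.card ^ 2) * Real.exp (-(δ ^ 2 * (n * q ^ 2) / 32)) :=
          gnp_real_not_isPseudorandom_le hq₀ hq₁ hδ₀ hδ₁ hW
      _ ≤ (n * n + n ^ 2) * Real.exp (-(3 * Real.log n)) := by
          gcongr
          · exact hWn.trans (le_mul_of_one_le_left hn.le hn₁)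
          · linarith
      _ = 2 / n := by
          rw [Real.exp_neg, ← Nat.cast_ofNat (n := 3), Real.exp_nat_mul, Real.exp_log hn]
          field_simp
          ring
  rw [← compl_compl {ω | IsPseudorandom _ W q δ}, probReal_compl_eq_one_sub .of_discrete]
  exact sub_le_sub_left hfail 1

end RandomGraph

lemma eventually_mul_log_le_mul_sq {p : ℕ → ℝ}
    (hp : Tendsto (fun n : ℕ => p n / Real.sqrt (Real.log n / n)) atTop atTop) (C : ℝ) :
    ∀ᶠ n : ℕ in atTop, C * Real.log n ≤ n * p n ^ 2 := by
  filter_upwards [hp.eventually_ge_atTop (Real.sqrt C), eventually_ge_atTop 2] with n hle hn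
  have hlog : 0 < Real.log n := Real.log_pos (mod_cast hn)
  have hquot : 0 < Real.log n / n := by positivity
  rw [le_div_iff₀ (Real.sqrt_pos.2 hquot), ← Real.sqrt_mul' C hquot.le] at hle
  calc C * Real.log n = n * (C * (Real.log n / n)) := by field_simp
    _ ≤ n * p n ^ 2 := by
        gcongr
        exact (Real.sqrt_le_left ((Real.sqrt_nonneg _).trans hle)).1 hle

theorem ofReal_one_sub_two_div_le_gnp_hasCycleCover {n r : ℕ} (hn : 0 < n) (hr : 0 < r) {q : ℝ}
    (hq₀ : 0 < q) (hq₁ : q ≤ 1) {W : Finset (Fin n)} (hW : (W.card : ℝ) ≤ n / (40 * r))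
    (hlog : 38400 * r ^ 2 * Real.log n ≤ n * q ^ 2) :
    ENNReal.ofReal (1 - 2 / n) ≤ gnp n q
      {ω | ∀ (col : Sym2 (Fin n) → Fin r) (f : Fin n → Fin r),
        IsMajorityPartition (graphOf ω) col W f →
        ∀ i : Fin r,
          HasCycleCover (auxGraph (graphOf ω) col W f i (n * q ^ 2 / (50 * r : ℝ) ^ 4))
            {v | v ∈ W ∧ f v = i} (3 * r - 1)
            (18 * r ^ 2 * (384 * r) / q + (3 * r : ℝ) ^ 3)} := by
  have : NeZero n := ⟨hn.ne'⟩
  have := isProbabilityMeasure_gnp n hq₀.le hq₁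
  have hr₁ : (1 : ℝ) ≤ r := Nat.one_le_cast.2 hr
  calc ENNReal.ofReal (1 - 2 / n)
      ≤ ENNReal.ofReal ((gnp n q).real
          {ω | IsPseudorandom (fun v ↦ commonNbhd (graphOf ω) W {v}) W q (1 / (20 * r))}) := by
        refine ENNReal.ofReal_le_ofReal (one_sub_two_div_le_gnp_real_isPseudorandom hq₀.le
          hq₁ (by positivity) ?_ (hW.trans_eq (by ring)) ?_)
        · exact div_le_one_of_le₀ (by linarith) (by positivity)
        · rw [div_pow, one_pow, div_mul_eq_mul_div, one_mul, le_div_iff₀ (by positivity)]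
          linarith
    _ = gnp n q {ω | IsPseudorandom (fun v ↦ commonNbhd (graphOf ω) W {v}) W q (1 / (20 * r))} :=
        ofReal_measureReal
    _ ≤ _ := by
        refine measure_mono fun ω hω ↦ ?_
        exact fun col f hf i ↦ hf.hasCycleCover_auxGraph hq₀ hω i

lemma div_pow_four_le_div (n : ℕ) {r : ℕ} (hr : 0 < r) :
    (n : ℝ) / (100 * r) ^ 4 ≤ n / (40 * r) := by
  refine div_le_div_of_nonneg_left n.cast_nonneg (by positivity) ?_
  have hr₁ : (1 : ℝ) ≤ 100 * r := by norm_cast; lia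
  calc (40 * r : ℝ) ≤ 100 * r := by gcongr; norm_num
    _ ≤ (100 * r) ^ 4 := le_self_pow₀ hr₁ four_ne_zero

theorem stmt11_general (r : ℕ) (hr : 0 < r) (W : (n : ℕ) → Finset (Fin n))
    (hW : ∀ n, ((W n).card : ℝ) ≤ n / (40 * r)) (p : ℕ → ℝ) (hp0 : ∀ n, 0 ≤ p n)
    (hp1 : ∀ n, p n ≤ 1)
    (hlog : ∀ᶠ n : ℕ in atTop, 38400 * r ^ 2 * Real.log n ≤ n * p n ^ 2) :
    Tendsto (fun n ↦ gnp n (p n)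
      {ω | ∀ (col : Sym2 (Fin n) → Fin r) (f : Fin n → Fin r),
        IsMajorityPartition (graphOf ω) col (W n) f →
        ∀ i : Fin r,
          HasCycleCover (auxGraph (graphOf ω) col (W n) f i (n * p n ^ 2 / (50 * r : ℝ) ^ 4))
            {v | v ∈ W n ∧ f v = i} (3 * r - 1)
            (18 * r ^ 2 * (384 * r) / p n + (3 * r : ℝ) ^ 3)})
      atTop (nhds 1) := by
  have hlim : Tendsto (fun n : ℕ ↦ ENNReal.ofReal (1 - 2 / n)) atTop (nhds 1) := by
    simpa using ENNReal.tendsto_ofReal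
      ((tendsto_const_div_atTop_nhds_zero_nat (2 : ℝ)).const_sub 1)
  refine tendsto_of_tendsto_of_tendsto_of_le_of_le' hlim tendsto_const_nhds ?_
    (.of_forall fun n ↦ ?_)
  · filter_upwards [hlog, eventually_ge_atTop 2] with n hlog hn
    have hp : 0 < p n := by
      have hlog_pos : 0 < Real.log n := Real.log_pos (mod_cast hn)
      refine (hp0 n).lt_of_ne fun h ↦ ?_
      rw [← h, zero_pow two_ne_zero, mul_zero] at hlog
      exact hlog.not_gt (by positivity)
    exact ofReal_one_sub_two_div_le_gnp_hasCycleCover (by lia) hr hp (hp1 n) (hW n) hlog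
  · have := isProbabilityMeasure_gnp n (hp0 n) (hp1 n)
    exact prob_le_one

/-- Let `r ≥ 2`, `c = 384r`, `W = W(n) ⊆ [n]` fixed sets of at most
`n/(100r)^4` vertices, and `p = p(n) ≫ (log n/n)^{1/2}`. Then w.h.p. for every `r`-coloring of
the edges of `G ~ G(n,p)` and every associated majority-color partition of `W`, each auxiliary
graph `H_i` contains (at most) `3r - 1` vertex-disjoint cycles covering all but at most
`18 r² c / p + (3r)³` vertices of `H_i`. -/
theorem stmt11 (r : ℕ) (hr : 2 ≤ r) (c : ℝ) (hc : c = 384 * r)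
    (W : (n : ℕ) → Finset (Fin n))
    (hW : ∀ n : ℕ, ((W n).card : ℝ) ≤ (n : ℝ) / (100 * r : ℝ) ^ 4)
    (p : ℕ → ℝ) (hp0 : ∀ n, 0 ≤ p n) (hp1 : ∀ n, p n ≤ 1)
    (hpgg : Tendsto (fun n : ℕ => p n / Real.sqrt (Real.log n / n)) atTop atTop) :
    Tendsto (fun n => gnp n (p n)
      {ω | ∀ (col : Sym2 (Fin n) → Fin r) (f : Fin n → Fin r),
        IsMajorityPartition (graphOf ω) col (W n) f →
        ∀ i : Fin r,
          ∃ 𝒞 : Finset (Set (Fin n)),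
            𝒞.card ≤ 3 * r - 1 ∧
            (𝒞 : Set (Set (Fin n))).Pairwise Disjoint ∧
            (∀ S ∈ 𝒞,
              IsCycleSet (auxGraph (graphOf ω) col (W n) f i
                ((n : ℝ) * p n ^ 2 / (50 * r : ℝ) ^ 4)) S ∧
              S ⊆ {v | v ∈ W n ∧ f v = i}) ∧
            ((({v | v ∈ W n ∧ f v = i} \ ⋃₀ (𝒞 : Set (Set (Fin n)))).ncard : ℝ) ≤
              18 * r ^ 2 * c / p n + (3 * r : ℝ) ^ 3)})
      atTop (nhds 1) := by
  subst hc
  exact stmt11_general r (by lia) W (fun n ↦ (hW n).trans (div_pow_four_le_div n (by lia))) p hp0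
    hp1 (eventually_mul_log_le_mul_sq hpgg _)
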